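/- arXiv:2304.06432 — 2 statements merged into one kernel-verified Lean document; each statement's English description precedes it below -/
import Mathlib

section
/- Let α, β be Lyndon words over a linearly ordered alphabet X with α ≺ β, where α has length at least 2 and standard factorization (α_L, α_R), and suppose α_R ≺ β. Then the concatenation αβ is a Lyndon word satisfying α_R ⪯ (αβ)_R ≺ β, and in the free algebra ℤ⟨X⟩ there is a finitely supported family of integers (k_γ), indexed by Lyndon words γ, such that E(α)E(β) − E(β)E(α) = E(αβ) + Σ_γ k_γ·E(γ), where every γ with k_γ ≠ 0 has length at least 2 and satisfies αβ ≺ γ ≺ β, α_R ⪯ γ_R ≺ β (γ_R being the right factor of the standard factorization of γ), and γ(x) = α(x) + β(x) for every letter x. -/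
/-- A nonempty word over a linearly ordered alphabet is a Lyndon word if it is
strictly lexicographically smaller than every nontrivial rotation of itself
(vacuously true for single letters). -/
def IsLyndon {X : Type*} [LinearOrder X] (w : List X) : Prop :=
  w ≠ [] ∧ ∀ u v : List X, u ≠ [] → v ≠ [] → w = u ++ v → List.Lex (· < ·) w (v ++ u)

/-!
The standard right factor of a Lyndon word is its least proper suffix. If `β ⪯ α_R`, or if `α` is
a letter, then `(α, β)` is the standard factorization of `αβ` and the commutator is exactly
`E(αβ)`. Otherwise the Jacobi identity gives
`[E(α), E(β)] = [E(α_L), [E(α_R), E(β)]] - [E(α_R), [E(α_L), E(β)]]`.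
The inner commutators have a shorter left entry and the same right entry. Expanding them leaves
outer commutators `[E(α_L), E(γ)]` and `[E(α_R), E(γ)]` with `γ ≺ β`, all in the letters of `αβ`;
if `γ ≺ α_R`, then the second is `-E(γα_R)`. Only finitely many words use the letters of `αβ` at
most as often as `αβ` does, so induction on the right entry, and then on the length of the left
entry, terminates.
-/

section LexOrder

variable {X : Type*} {a b : List X}

theorem exists_eq_append_of_append_eq_append {c d : List X} (h : a ++ b = c ++ d)
    (hlen : b.length ≤ d.length) : ∃ t, a = c ++ t ∧ d = t ++ b := by
  obtain ⟨t, rfl⟩ := List.suffix_of_suffix_length_le ⟨a, h⟩ ⟨c, rfl⟩ hlen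
  exact ⟨t, List.append_cancel_right (by rw [h, List.append_assoc]), rfl⟩

theorem lt_append_of_ne_nil [LT X] (a : List X) (hb : b ≠ []) : a < a ++ b := by
  obtain ⟨x, b, rfl⟩ := List.exists_cons_of_ne_nil hb
  simpa only [List.append_nil] using
    List.append_left_lt (l₁ := a) (List.nil_lt_cons x b)

theorem append_lt_append_of_not_prefix [LT X] (hab : a < b) (hpre : ¬ a <+: b)
    (c d : List X) : a ++ c < b ++ d := by
  induction List.lex_lt.2 hab with
  | nil => exact absurd List.nil_prefix hpre
  | rel hxy => exact List.Lex.rel hxy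
  | cons htail ih =>
    exact List.Lex.cons (ih htail fun h => hpre ((List.prefix_cons_inj _).2 h))

variable [LinearOrder X]

theorem strictMono_append_left (a : List X) : StrictMono (a ++ ·) :=
  fun _ _ => List.append_left_lt

theorem append_lt_append_of_length_le (hab : a < b) (hlen : b.length ≤ a.length)
    (c d : List X) : a ++ c < b ++ d :=
  append_lt_append_of_not_prefix hab (fun h => hab.ne (h.eq_of_length_le hlen)) c d

end LexOrder

section LyndonWords

variable {X : Type*} [LinearOrder X] {a b c d u v w l r : List X}

/-- `LeProperSuffixes c w` says that `c` is a lower bound for the nonempty proper suffixes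
of `w`. Standard right factors are controlled through such bounds. -/
def LeProperSuffixes (c w : List X) : Prop :=
  ∀ u v : List X, u ≠ [] → v ≠ [] → w = u ++ v → c ≤ v

theorem LeProperSuffixes.mono (h : LeProperSuffixes c w) (hd : d ≤ c) : LeProperSuffixes d w :=
  fun u v hu hv hw => hd.trans (h u v hu hv hw)

theorem IsLyndon.append_lt_right (h : IsLyndon (u ++ v)) (hu : u ≠ []) (hv : v ≠ []) :
    u ++ v < v := by
  have hrot : u ++ v < v ++ u := h.2 u v hu hv rfl
  by_contra! hle
  have hlt : v < u ++ v := lt_of_le_of_ne hle (by simpa using hu)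
  by_cases hpre : v <+: u ++ v
  · obtain ⟨t, ht⟩ := hpre
    have hlen : t.length = u.length := by
      have := congrArg List.length ht
      simp only [List.length_append] at this
      omega
    have htu : t < u := (strictMono_append_left v).lt_iff_lt.1 (ht.trans_lt hrot)
    have ht0 : t ≠ [] := by simpa [← List.length_pos_iff, hlen] using hu
    exact (append_lt_append_of_length_le htu hlen.ge v v).asymm (h.2 v t hv ht0 ht.symm)
  · have := append_lt_append_of_not_prefix hlt hpre u []
    rw [List.append_nil] at this
    exact this.asymm hrot

theorem isLyndon_iff_leProperSuffixes : IsLyndon w ↔ w ≠ [] ∧ LeProperSuffixes w w := by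
  refine ⟨fun h => ⟨h.1, ?_⟩, fun ⟨hw, h⟩ => ⟨hw, fun u v hu hv huv => ?_⟩⟩
  · rintro u v hu hv rfl
    exact (h.append_lt_right hu hv).le
  · exact (h u v hu hv huv).trans_lt (lt_append_of_ne_nil v hu)

theorem IsLyndon.leProperSuffixes (h : IsLyndon w) : LeProperSuffixes w w :=
  (isLyndon_iff_leProperSuffixes.1 h).2

theorem IsLyndon.append_lt (hb : IsLyndon b) (ha : a ≠ []) (hab : a < b) : a ++ b < b := by
  by_cases hpre : a <+: b
  · obtain ⟨t, rfl⟩ := hpre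
    have ht : t ≠ [] := by rintro rfl; simp at hab
    exact strictMono_append_left a (hb.append_lt_right ha ht)
  · simpa only [List.append_nil] using append_lt_append_of_not_prefix hab hpre b []

theorem LeProperSuffixes.append (ha : LeProperSuffixes c a) (hb : IsLyndon b) (hcb : c ≤ b) :
    LeProperSuffixes c (a ++ b) := by
  intro u v hu hv huv
  rcases List.append_eq_append_iff.1 huv with ⟨s, rfl, rfl⟩ | ⟨s, rfl, rfl⟩
  · rcases eq_or_ne s [] with rfl | hs
    · exact hcb
    · exact hcb.trans (hb.append_lt_right hs hv).le
  · rcases eq_or_ne s [] with rfl | hs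
    · exact hcb
    · exact (ha u s hu hs rfl).trans (lt_append_of_ne_nil s hb.1).le

theorem IsLyndon.append (ha : IsLyndon a) (hb : IsLyndon b) (hab : a < b) :
    IsLyndon (a ++ b) := by
  refine isLyndon_iff_leProperSuffixes.2 ⟨by simp [ha.1], .append ?_ hb (hb.append_lt ha.1 hab).le⟩
  rintro u v hu hv rfl
  have hlt := append_lt_append_of_length_le (ha.append_lt_right hu hv) (by simp) b []
  rw [List.append_nil] at hlt
  exact hlt.le

theorem exists_isLyndon_least_suffix (hw : w ≠ []) :
    ∃ u m, w = u ++ m ∧ IsLyndon m ∧ ∀ u' v, w = u' ++ v → v ≠ [] → m ≤ v := by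
  obtain ⟨m, ⟨hmw, hm⟩, hmin⟩ := Set.exists_min_image {s | s <:+ w ∧ s ≠ []} id
    (w.tails.finite_toSet.subset fun s hs => List.mem_tails s w |>.2 hs.1)
    ⟨w, List.suffix_rfl, hw⟩
  obtain ⟨u, rfl⟩ := hmw
  refine ⟨u, m, rfl, isLyndon_iff_leProperSuffixes.2 ⟨hm, ?_⟩,
    fun u' v h hv => hmin v ⟨⟨u', h.symm⟩, hv⟩⟩
  rintro u' v - hv rfl
  exact hmin v ⟨⟨u ++ u', List.append_assoc ..⟩, hv⟩

theorem leProperSuffixes_of_isLyndon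
    (h : ∀ u v, u ≠ [] → IsLyndon v → w = u ++ v → c ≤ v) : LeProperSuffixes c w := by
  rintro u v hu hv rfl
  obtain ⟨a, m, rfl, hm, hmin⟩ := exists_isLyndon_least_suffix hv
  exact (h (u ++ a) m (by simp [hu]) hm (by simp)).trans (hmin [] _ rfl hv)

/-- `(l, r)` is the standard factorization of `w`: `r` is the longest Lyndon word among the
proper suffixes of `w`, and `l` is the complementary prefix. -/
structure IsStandardFactorization (w l r : List X) : Prop where
  eq_append : w = l ++ r
  left_ne_nil : l ≠ []
  isLyndon_right : IsLyndon r
  length_le : ∀ s p : List X, w = p ++ s → p ≠ [] → IsLyndon s → s.length ≤ r.length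

theorem isStandardFactorization_iff : IsStandardFactorization w l r ↔
    w = l ++ r ∧ l ≠ [] ∧ IsLyndon r ∧
      ∀ s p : List X, w = p ++ s → p ≠ [] → IsLyndon s → s.length ≤ r.length :=
  ⟨fun ⟨h₁, h₂, h₃, h₄⟩ => ⟨h₁, h₂, h₃, h₄⟩, fun ⟨h₁, h₂, h₃, h₄⟩ => ⟨h₁, h₂, h₃, h₄⟩⟩

namespace IsStandardFactorization

theorem leProperSuffixes (h : IsStandardFactorization w l r) : LeProperSuffixes r w := by
  refine leProperSuffixes_of_isLyndon fun u v hu hv hw => ?_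
  obtain ⟨t, -, rfl⟩ := exists_eq_append_of_append_eq_append
    (hw.symm.trans h.eq_append) (h.length_le v u hw hu hv)
  rcases eq_or_ne t [] with rfl | ht
  · exact le_rfl
  · exact (h.isLyndon_right.append_lt_right ht hv.1).le

theorem of_leProperSuffixes (hl : l ≠ []) (hr : IsLyndon r) (h : LeProperSuffixes r (l ++ r)) :
    IsStandardFactorization (l ++ r) l r := by
  refine ⟨rfl, hl, hr, fun s p hsp hp hs => ?_⟩
  by_contra! hlt
  obtain ⟨t, -, rfl⟩ := exists_eq_append_of_append_eq_append hsp hlt.le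
  have ht : t ≠ [] := by rintro rfl; simp at hlt
  exact (h p (t ++ r) hp hs.1 hsp).not_gt (hs.append_lt_right ht hr.1)

theorem append (ha : a ≠ []) (hb : IsLyndon b) (h : LeProperSuffixes b a) :
    IsStandardFactorization (a ++ b) a b :=
  of_leProperSuffixes ha hb (h.append hb le_rfl)

theorem two_le_length (h : IsStandardFactorization w l r) : 2 ≤ w.length := by
  have hl := List.length_pos_iff.2 h.left_ne_nil
  have hr := List.length_pos_iff.2 h.isLyndon_right.1
  rw [h.eq_append, List.length_append]
  omega

theorem leProperSuffixes_left (h : IsStandardFactorization w l r) : LeProperSuffixes r l := by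
  refine leProperSuffixes_of_isLyndon fun u m hu hm hl => ?_
  by_contra! hmr
  have hlen := h.length_le (m ++ r) u (by rw [h.eq_append, hl, List.append_assoc]) hu
    (hm.append h.isLyndon_right hmr)
  simp [hm.1] at hlen

theorem left_lt (h : IsStandardFactorization w l r) : l < w :=
  h.eq_append ▸ lt_append_of_ne_nil l h.isLyndon_right.1

theorem lt_right (h : IsStandardFactorization w l r) (hw : IsLyndon w) : w < r := by
  obtain rfl := h.eq_append
  exact hw.append_lt_right h.left_ne_nil h.isLyndon_right.1

theorem isLyndon_left (h : IsStandardFactorization w l r) (hw : IsLyndon w) : IsLyndon l :=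
  isLyndon_iff_leProperSuffixes.2
    ⟨h.left_ne_nil, h.leProperSuffixes_left.mono (h.left_lt.trans (h.lt_right hw)).le⟩

theorem perm_left_append (h : IsStandardFactorization w l r) (hb : b.Perm (r ++ c)) :
    (l ++ b).Perm (w ++ c) := by
  rw [h.eq_append, List.append_assoc]
  exact hb.append_left l

theorem perm_right_append (h : IsStandardFactorization w l r) (hb : b.Perm (l ++ c)) :
    (r ++ b).Perm (w ++ c) := by
  rw [h.eq_append]
  refine (hb.append_left r).trans ?_
  rw [← List.append_assoc]
  exact List.perm_append_comm.append_right c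

end IsStandardFactorization

theorem exists_isStandardFactorization (hw : 2 ≤ w.length) :
    ∃ l r, IsStandardFactorization w l r := by
  obtain ⟨x, y, t, rfl⟩ : ∃ x y t, w = x :: y :: t := by
    match w, hw with
    | x :: y :: t, _ => exact ⟨x, y, t, rfl⟩
  obtain ⟨u, r, hur, hr, hmin⟩ := exists_isLyndon_least_suffix (List.cons_ne_nil y t)
  rw [hur, ← List.cons_append]
  refine ⟨x :: u, r, .of_leProperSuffixes (List.cons_ne_nil x u) hr fun p s hp hs h => ?_⟩
  obtain ⟨z, p, rfl⟩ := List.exists_cons_of_ne_nil hp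
  simp only [List.cons_append, List.cons.injEq] at h
  exact hmin p s (hur.trans h.2) hs

theorem IsStandardFactorization.exists_append (h : IsStandardFactorization a l r)
    (hb : IsLyndon b) (hrb : r < b) :
    ∃ l' r', IsStandardFactorization (a ++ b) l' r' ∧ r ≤ r' ∧ r' < b := by
  have hlen : 2 ≤ (a ++ b).length := by
    have := h.two_le_length
    rw [List.length_append]
    omega
  obtain ⟨l', r', h'⟩ := exists_isStandardFactorization hlen
  have hr' : r' ≤ r ++ b := h'.leProperSuffixes l (r ++ b) h.left_ne_nil
    (List.append_ne_nil_of_left_ne_nil h.isLyndon_right.1 b)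
    (by rw [h.eq_append, List.append_assoc])
  exact ⟨l', r', h', h.leProperSuffixes.append hb hrb.le l' r' h'.left_ne_nil
    h'.isLyndon_right.1 h'.eq_append, hr'.trans_lt (hb.append_lt h.isLyndon_right.1 hrb)⟩

theorem leProperSuffixes_or_exists_isStandardFactorization (c w : List X) :
    LeProperSuffixes c w ∨ ∃ l r, IsStandardFactorization w l r ∧ r < c := by
  refine or_iff_not_imp_left.2 fun h => ?_
  simp only [LeProperSuffixes, not_forall, not_le] at h
  obtain ⟨u, v, hu, hv, rfl, hvc⟩ := h
  have := List.length_pos_iff.2 hu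
  have := List.length_pos_iff.2 hv
  obtain ⟨l, r, hlr⟩ := exists_isStandardFactorization (w := u ++ v)
    (by rw [List.length_append]; omega)
  exact ⟨l, r, hlr, (hlr.leProperSuffixes u v hu hv rfl).trans_lt hvc⟩

end LyndonWords

section SubpermInduction

open scoped List

theorem finite_setOf_subperm {Y : Type*} (w : List Y) : {b | b <+~ w}.Finite := by
  refine (w.sublists.flatMap List.permutations).finite_toSet.subset ?_
  rintro b ⟨s, hsb, hsw⟩
  exact List.mem_flatMap.2 ⟨s, List.mem_sublists.2 hsw, List.mem_permutations.2 hsb.symm⟩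

theorem subperm_append_induction {Y : Type*} (r : List Y → List Y → Prop)
    [IsStrictOrder (List Y) r] {P : List Y → List Y → Prop}
    (step : ∀ α β, (∀ a b, (a ++ b) <+~ (α ++ β) → r b β → P a b) →
      (∀ a, a <+~ α → a.length < α.length → P a β) → P α β)
    (α β : List Y) : P α β := by
  suffices h : ∀ w, ∀ b ∈ {b | b <+~ w}, ∀ a, (a ++ b) <+~ w → P a b from
    h (α ++ β) β (List.sublist_append_right α β).subperm α (List.Subperm.refl _)
  intro w b hb
  refine (finite_setOf_subperm w).wellFoundedOn.induction (r := r)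
    (P := fun b => ∀ a, (a ++ b) <+~ w → P a b) hb fun b _ ih_b a => ?_
  induction hn : a.length using Nat.strong_induction_on generalizing a with
  | _ n ih_a =>
    subst hn
    intro hab
    refine step a b (fun a' b' hsub hlt => ?_) fun a' hsub hlt => ?_
    · have hsub' := hsub.trans hab
      exact ih_b b' ((List.sublist_append_right a' b').subperm.trans hsub') hlt a' hsub'
    · exact ih_a _ hlt a' rfl ((List.subperm_append_right b |>.2 hsub).trans hab)

end SubpermInduction

section Commutators

open Set

variable {X L : Type*} [LinearOrder X] [LieRing L] {E : List X → L}
  {w w' c l r α β γ : List X} {J J' R R' : Set (List X)}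

/-- The Lyndon words with the same letters as `w` that lie in `J` and whose standard right factor
lies in `R`. -/
def lyndonWords (w : List X) (J R : Set (List X)) : Set (List X) :=
  {γ | IsLyndon γ ∧ γ.Perm w ∧ γ ∈ J ∧ ∃ l r, IsStandardFactorization γ l r ∧ r ∈ R}

theorem lyndonWords_mono (hw : w.Perm w') (hJ : J ⊆ J') (hR : R ⊆ R') :
    lyndonWords w J R ⊆ lyndonWords w' J' R' :=
  fun _ ⟨hγ, hperm, hγJ, l, r, hlr, hr⟩ => ⟨hγ, hperm.trans hw, hJ hγJ, l, r, hlr, hR hr⟩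

/-- The recursion of the Lyndon–Shirshov basis, in an arbitrary Lie ring and with arbitrary
values on letters. -/
def IsLyndonShirshovFamily (E : List X → L) : Prop :=
  ∀ ⦃w l r : List X⦄, IsLyndon w → IsStandardFactorization w l r → E w = ⁅E l, E r⁆

/-- The integral combinations of the `E γ` with `γ ∈ lyndonWords w J R`. -/
def lyndonSpan (E : List X → L) (w : List X) (J R : Set (List X)) : Submodule ℤ L :=
  Submodule.span ℤ (E '' lyndonWords w J R)

theorem lyndonSpan_mono (hw : w.Perm w') (hJ : J ⊆ J') (hR : R ⊆ R') :
    lyndonSpan E w J R ≤ lyndonSpan E w' J' R' :=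
  Submodule.span_mono (image_mono (lyndonWords_mono hw hJ hR))

theorem mem_lyndonSpan (h : γ ∈ lyndonWords w J R) : E γ ∈ lyndonSpan E w J R :=
  Submodule.subset_span (mem_image_of_mem E h)

theorem lie_mem_of_mem_lyndonSpan {N : Submodule ℤ L} {x y : L}
    (h : ∀ γ ∈ lyndonWords w J R, ⁅x, E γ⁆ ∈ N) (hy : y ∈ lyndonSpan E w J R) : ⁅x, y⁆ ∈ N :=
  (Submodule.span_le (p := N.comap (LieAlgebra.ad ℤ L x))).2 (forall_mem_image.2 h) hy

/-- The commutator formula for the pair `(α, β)`, with an arbitrary lower bound `c` for the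
proper suffixes of `α` in place of its standard right factor, so that letters `α` are covered. -/
def CommutatorFormula (E : List X → L) (α β : List X) : Prop :=
  IsLyndon α → IsLyndon β → α < β → ∀ c, LeProperSuffixes c α →
    ⁅E α, E β⁆ - E (α ++ β) ∈ lyndonSpan E (α ++ β) (Ioo (α ++ β) β) (Ico c β)

theorem append_mem_lyndonWords (hα : IsLyndon α) (hβ : IsLyndon β) (hαβ : α < β)
    (hc : LeProperSuffixes c α) (hcβ : c ≤ β) :
    α ++ β ∈ lyndonWords (α ++ β) (Ico (α ++ β) β) (Icc c β) := by
  have := List.length_pos_iff.2 hα.1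
  have := List.length_pos_iff.2 hβ.1
  obtain ⟨l, r, hlr⟩ := exists_isStandardFactorization (w := α ++ β)
    (by rw [List.length_append]; omega)
  exact ⟨hα.append hβ hαβ, .refl _, ⟨le_rfl, hβ.append_lt hα.1 hαβ⟩, l, r, hlr,
    hc.append hβ hcβ l r hlr.left_ne_nil hlr.isLyndon_right.1 hlr.eq_append,
    hlr.leProperSuffixes α β hα.1 hβ.1 rfl⟩

theorem CommutatorFormula.lie_mem (h : CommutatorFormula E α β) (hα : IsLyndon α)
    (hβ : IsLyndon β) (hαβ : α < β) (hc : LeProperSuffixes c α) (hcβ : c ≤ β) :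
    ⁅E α, E β⁆ ∈ lyndonSpan E (α ++ β) (Ico (α ++ β) β) (Icc c β) := by
  rw [← sub_add_cancel ⁅E α, E β⁆ (E (α ++ β))]
  exact add_mem (lyndonSpan_mono (.refl _) Ioo_subset_Ico_self Ico_subset_Icc_self
    (h hα hβ hαβ c hc)) (mem_lyndonSpan (append_mem_lyndonWords hα hβ hαβ hc hcβ))

theorem CommutatorFormula.lie_mem_of_lt (h : CommutatorFormula E α γ) (hα : IsLyndon α)
    (hγ : IsLyndon γ) (hαγ : α < γ) (hc : LeProperSuffixes c α) (hcγ : c ≤ γ)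
    (hperm : (α ++ γ).Perm w) (hw : w < α ++ γ) (hγβ : γ < β) :
    ⁅E α, E γ⁆ ∈ lyndonSpan E w (Ioo w β) (Ico c β) :=
  lyndonSpan_mono hperm ((Ico_subset_Ioo_left hw).trans (Ioo_subset_Ioo_right hγβ.le))
    (Icc_subset_Ico_right hγβ) (h.lie_mem hα hγ hαγ hc hcγ)

theorem IsLyndonShirshovFamily.append_eq_lie (hE : IsLyndonShirshovFamily E) (hα : IsLyndon α)
    (hβ : IsLyndon β) (hαβ : α < β) (h : LeProperSuffixes β α) : E (α ++ β) = ⁅E α, E β⁆ :=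
  hE (hα.append hβ hαβ) (.append hα.1 hβ h)

theorem lie_left_lie_right_sub_mem (hα : IsLyndon α) (hβ : IsLyndon β)
    (hlr : IsStandardFactorization α l r) (hrβ : r < β)
    (hl_formula : ∀ b, b.Perm (r ++ β) → b < β → CommutatorFormula E l b)
    (hr_formula : CommutatorFormula E r β) :
    ⁅E l, ⁅E r, E β⁆⁆ - E (α ++ β) ∈ lyndonSpan E (α ++ β) (Ioo (α ++ β) β) (Ico r β) := by
  have hl := hlr.isLyndon_left hα
  have hr := hlr.isLyndon_right
  have hrβ_lt : r ++ β < β := hβ.append_lt hr.1 hrβ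
  have hr_lt : r < r ++ β := lt_append_of_ne_nil r hβ.1
  have hl_lt : l < r ++ β := (hlr.left_lt.trans (hlr.lt_right hα)).trans hr_lt
  have happend : α ++ β = l ++ (r ++ β) := by rw [hlr.eq_append, List.append_assoc]
  have hlead : ⁅E l, E (r ++ β)⁆ - E (α ++ β) ∈
      lyndonSpan E (α ++ β) (Ioo (α ++ β) β) (Ico r β) := by
    rw [happend]
    exact lyndonSpan_mono (.refl _) (Ioo_subset_Ioo_right hrβ_lt.le)
      (Ico_subset_Ico_right hrβ_lt.le) <| hl_formula _ (.refl _) hrβ_lt hl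
        (hr.append hβ hrβ) hl_lt r hlr.leProperSuffixes_left
  have hrest : ⁅E l, ⁅E r, E β⁆ - E (r ++ β)⁆ ∈
      lyndonSpan E (α ++ β) (Ioo (α ++ β) β) (Ico r β) := by
    refine lie_mem_of_mem_lyndonSpan ?_ (hr_formula hr hβ hrβ r hr.leProperSuffixes)
    rintro γ ⟨hγ, hperm, ⟨hrβγ, hγβ⟩, -⟩
    exact (hl_formula γ hperm hγβ).lie_mem_of_lt hl hγ (hl_lt.trans hrβγ)
      hlr.leProperSuffixes_left (hr_lt.trans hrβγ).le (hlr.perm_left_append hperm)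
      (happend ▸ strictMono_append_left l hrβγ) hγβ
  rw [lie_sub] at hrest
  simpa only [sub_add_sub_cancel] using add_mem hrest hlead

theorem IsLyndonShirshovFamily.lie_mem_lyndonSpan (hE : IsLyndonShirshovFamily E)
    (hr : IsLyndon r) (hγ : IsLyndon γ) (hrβ : r < β) (hγβ : γ < β) (hrγ : LeProperSuffixes r γ)
    (hperm : (r ++ γ).Perm w) (hw_left : w < r ++ γ) (hw_right : w < γ ++ r)
    (h : CommutatorFormula E r γ) :
    ⁅E r, E γ⁆ ∈ lyndonSpan E w (Ioo w β) (Ico r β) := by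
  rcases lt_trichotomy γ r with hlt | rfl | hgt
  · rw [← lie_skew, ← hE.append_eq_lie hγ hr hlt hrγ]
    have hmem : γ ++ r ∈ lyndonWords w (Ioo w β) (Ico r β) :=
      ⟨hγ.append hr hlt, List.perm_append_comm.trans hperm,
        ⟨hw_right, (hr.append_lt hγ.1 hlt).trans hrβ⟩, γ, r, .append hγ.1 hr hrγ, le_rfl, hrβ⟩
    exact neg_mem (mem_lyndonSpan hmem)
  · rw [lie_self]
    exact zero_mem _
  · exact h.lie_mem_of_lt hr hγ hgt hr.leProperSuffixes hgt.le hperm hw_left hγβ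

theorem lie_right_lie_left_mem (hE : IsLyndonShirshovFamily E) (hα : IsLyndon α)
    (hβ : IsLyndon β) (hlr : IsStandardFactorization α l r) (hrβ : r < β)
    (hr_formula : ∀ b, b.Perm (l ++ β) → b < β → CommutatorFormula E r b)
    (hl_formula : CommutatorFormula E l β) :
    ⁅E r, ⁅E l, E β⁆⁆ ∈ lyndonSpan E (α ++ β) (Ioo (α ++ β) β) (Ico r β) := by
  have hr := hlr.isLyndon_right
  have hαr : α < r := hlr.lt_right hα
  have hlβ : l < β := hlr.left_lt.trans (hαr.trans hrβ)
  have happend : α ++ β = l ++ (r ++ β) := by rw [hlr.eq_append, List.append_assoc]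
  have hswap : α ++ β < (l ++ β) ++ r := by
    rw [happend, List.append_assoc]
    exact strictMono_append_left l
      ((hβ.append_lt hr.1 hrβ).trans (lt_append_of_ne_nil β hr.1))
  refine lie_mem_of_mem_lyndonSpan ?_ <| hl_formula.lie_mem (hlr.isLyndon_left hα) hβ hlβ
    hlr.leProperSuffixes_left hrβ.le
  rintro γ ⟨hγ, hperm, ⟨hlβγ, hγβ⟩, γL, γR, hγLR, hrγR, -⟩
  have hγr : α ++ β < γ ++ r := by
    rcases hlβγ.eq_or_lt with rfl | hlt
    · exact hswap
    · exact hswap.trans (append_lt_append_of_length_le hlt hperm.length_eq.le r r)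
  have hrγ : α ++ β < r ++ γ := append_lt_append_of_length_le hαr (by simp [hlr.eq_append]) β γ
  exact hE.lie_mem_lyndonSpan hr hγ hrβ hγβ (hγLR.leProperSuffixes.mono hrγR)
    (hlr.perm_right_append hperm) hrγ hγr (hr_formula γ hperm hγβ)

theorem IsLyndonShirshovFamily.commutatorFormula (hE : IsLyndonShirshovFamily E)
    (α β : List X) : CommutatorFormula E α β := by
  induction α, β using subperm_append_induction (fun a b : List X => a < b) with
  | step α β formula_of_perm formula_of_length_lt =>
  intro hα hβ hαβ c hc
  rcases leProperSuffixes_or_exists_isStandardFactorization β α with h | ⟨l, r, hlr, hrβ⟩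
  · rw [hE.append_eq_lie hα hβ hαβ h, sub_self]
    exact zero_mem _
  have hcr : c ≤ r := hc l r hlr.left_ne_nil hlr.isLyndon_right.1 hlr.eq_append
  refine lyndonSpan_mono (.refl _) Subset.rfl (Ico_subset_Ico_left hcr) ?_
  have hl_length : l.length < α.length := by
    simpa [hlr.eq_append, List.length_pos_iff] using hlr.isLyndon_right.1
  have hr_length : r.length < α.length := by
    simpa [hlr.eq_append, List.length_pos_iff] using hlr.left_ne_nil
  have hl_formula : CommutatorFormula E l β :=
    formula_of_length_lt l (hlr.eq_append ▸ (List.sublist_append_left l r).subperm) hl_length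
  have hr_formula : CommutatorFormula E r β :=
    formula_of_length_lt r (hlr.eq_append ▸ (List.sublist_append_right l r).subperm) hr_length
  rw [hE hα hlr, lie_lie, sub_right_comm]
  exact sub_mem
    (lie_left_lie_right_sub_mem hα hβ hlr hrβ
      (fun b hb => formula_of_perm l b (hlr.perm_left_append hb).subperm) hr_formula)
    (lie_right_lie_left_mem hE hα hβ hlr hrβ
      (fun b hb => formula_of_perm r b (hlr.perm_right_append hb).subperm) hl_formula)

theorem exists_finset_sum_of_mem_lyndonSpan {x : L} (hx : x ∈ lyndonSpan E w J R) :
    ∃ (S : Finset (List X)) (coef : List X → ℤ),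
      x = ∑ γ ∈ S, coef γ • E γ ∧ ∀ γ ∈ S, γ ∈ lyndonWords w J R := by
  obtain ⟨f, hf, rfl⟩ := (Finsupp.mem_span_image_iff_linearCombination ℤ).1 hx
  exact ⟨f.support, f, rfl, fun γ hγ => hf hγ⟩

end Commutators

theorem stmt_4_general {X L : Type*} [LinearOrder X] [LieRing L] {α αL αR β : List X}
    {E : List X → L} (hE : IsLyndonShirshovFamily E) (hα : IsLyndon α) (hβ : IsLyndon β)
    (hfact : IsStandardFactorization α αL αR) (hRβ : αR < β) :
    IsLyndon (α ++ β) ∧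
    (∃ l r, IsStandardFactorization (α ++ β) l r ∧ αR ≤ r ∧ r < β) ∧
    ∃ (S : Finset (List X)) (coef : List X → ℤ),
      ⁅E α, E β⁆ = E (α ++ β) + ∑ γ ∈ S, coef γ • E γ ∧
      ∀ γ ∈ S, IsLyndon γ ∧ 2 ≤ γ.length ∧ α ++ β < γ ∧ γ < β ∧
        (∃ γL γR, IsStandardFactorization γ γL γR ∧ αR ≤ γR ∧ γR < β) ∧
        ∀ x, γ.count x = α.count x + β.count x := by
  have hαβ : α < β := (hfact.lt_right hα).trans hRβ
  refine ⟨hα.append hβ hαβ, ?_, ?_⟩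
  · exact hfact.exists_append hβ hRβ
  · obtain ⟨S, coef, hsum, hS⟩ := exists_finset_sum_of_mem_lyndonSpan
      (hE.commutatorFormula α β hα hβ hαβ αR hfact.leProperSuffixes)
    refine ⟨S, coef, sub_eq_iff_eq_add'.1 hsum, fun γ hγ => ?_⟩
    obtain ⟨hγ, hperm, ⟨hlt, hγβ⟩, γL, γR, hγLR, hγR⟩ := hS γ hγ
    exact ⟨hγ, hγLR.two_le_length, hlt, hγβ, ⟨γL, γR, hγLR, hγR⟩, fun x => by
      rw [hperm.count_eq, List.count_append]⟩

/-- Commutator formula for the Lyndon–Shirshov basis, in the case `α_R ≺ β`: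
`[E(α), E(β)] = E(αβ) + Σ_γ k_γ E(γ)` with control on the Lyndon words `γ`. -/
theorem stmt_4 {X : Type*} [LinearOrder X] (α αL αR β : List X)
    (E : List X → FreeAlgebra ℤ X)
    (hE1 : ∀ x : X, E [x] = FreeAlgebra.ι ℤ x)
    (hE2 : ∀ γL γR : List X, IsLyndon (γL ++ γR) → γL ≠ [] → IsLyndon γR →
      (∀ δ β' : List X, γL ++ γR = β' ++ δ → β' ≠ [] → IsLyndon δ →
        δ.length ≤ γR.length) →
      E (γL ++ γR) = E γL * E γR - E γR * E γL)
    (hα : IsLyndon α) (hβ : IsLyndon β) (hαβ : List.Lex (· < ·) α β)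
    (hlen : 2 ≤ α.length) (hfact : α = αL ++ αR) (hαL : αL ≠ []) (hαR : IsLyndon αR)
    (hmax : ∀ δ β' : List X, α = β' ++ δ → β' ≠ [] → IsLyndon δ → δ.length ≤ αR.length)
    (hRβ : List.Lex (· < ·) αR β) :
    IsLyndon (α ++ β) ∧
    (∃ L' R : List X, α ++ β = L' ++ R ∧ L' ≠ [] ∧ IsLyndon R ∧
      (∀ δ β' : List X, α ++ β = β' ++ δ → β' ≠ [] → IsLyndon δ → δ.length ≤ R.length) ∧
      ¬ List.Lex (· < ·) R αR ∧ List.Lex (· < ·) R β) ∧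
    ∃ (S : Finset (List X)) (coef : List X → ℤ),
      E α * E β - E β * E α = E (α ++ β) + ∑ γ ∈ S, coef γ • E γ ∧
      ∀ γ ∈ S, IsLyndon γ ∧ 2 ≤ γ.length ∧
        List.Lex (· < ·) (α ++ β) γ ∧ List.Lex (· < ·) γ β ∧
        (∃ γL γR : List X, γ = γL ++ γR ∧ γL ≠ [] ∧ IsLyndon γR ∧
          (∀ δ β' : List X, γ = β' ++ δ → β' ≠ [] → IsLyndon δ → δ.length ≤ γR.length) ∧
          ¬ List.Lex (· < ·) γR αR ∧ List.Lex (· < ·) γR β) ∧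
        ∀ x : X, γ.count x = α.count x + β.count x := by
  let _ := LieRing.ofAssociativeRing (A := FreeAlgebra ℤ X)
  have hE : IsLyndonShirshovFamily E := fun w l r hw h => by
    obtain rfl := h.eq_append
    exact hE2 _ _ hw h.left_ne_nil h.isLyndon_right h.length_le
  simpa only [isStandardFactorization_iff, and_assoc, List.lex_lt, not_lt,
    LieRing.of_associative_ring_bracket] using
    stmt_4_general hE hα hβ ⟨hfact, hαL, hαR, hmax⟩ hRβ
end

section
/- Let X = {1, 2} with 1 ≺ 2 and let s, t ≥ 1. Then the word 1^s·2^t (s copies of the letter 1 followed by t copies of the letter 2) is a Lyndon word, and C(1^s·2^t) = 1. -/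
/-! Write a Lyndon word as `x w`. When `w` is itself Lyndon, its factorization has a single factor,
the factorials cancel, and the recursion reads `C (x w) = C w`; hence all letters of `1 ^ s` but
the last can be removed from `1 ^ s 2 ^ t`. In `1 2 ^ t` the remaining word is the `t`-th power of a
letter, so its coefficient is `t! / (1! ^ t t!) = 1`. -/

section

open scoped Nat

variable {X : Type*} [LinearOrder X]

theorem IsLyndon.singleton (x : X) : IsLyndon [x] := by
  refine ⟨List.cons_ne_nil _ _, fun u v hu hv h => ?_⟩
  rcases List.append_eq_singleton_iff.1 h.symm with ⟨rfl, -⟩ | ⟨-, rfl⟩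
  · exact absurd rfl hu
  · exact absurd rfl hv

theorem IsLyndon.replicate_append {a : X} {s : ℕ} {l : List X} (hs : 1 ≤ s) (hl : l ≠ [])
    (hal : ∀ x ∈ l, a < x) : IsLyndon (List.replicate s a ++ l) := by
  refine ⟨List.append_ne_nil_of_right_ne_nil _ hl, fun u v hu hv h => ?_⟩
  rcases List.append_eq_append_iff.1 h with ⟨l₁, -, rfl⟩ | ⟨c, hrep, rfl⟩
  · obtain ⟨n, rfl⟩ := Nat.exists_eq_add_of_le' hs
    obtain ⟨x, v, rfl⟩ := List.exists_cons_of_ne_nil hv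
    exact .rel (hal x (by simp))
  · -- Cutting inside `a ^ s = a ^ i * a ^ j` compares `a ^ j * (a ^ i * l)` with
    -- `a ^ j * (l * a ^ i)`, and these differ right after the common prefix `a ^ j`.
    obtain ⟨-, hu', hc⟩ := List.append_eq_replicate_iff.1 hrep.symm
    obtain ⟨i, hi⟩ := Nat.exists_eq_succ_of_ne_zero (List.length_pos_iff.2 hu).ne'
    obtain ⟨x, l, rfl⟩ := List.exists_cons_of_ne_nil hl
    have hcomm : u ++ c = c ++ u := by
      rw [hu', hc, ← List.replicate_add, ← List.replicate_add, Nat.add_comm]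
    rw [hrep, hcomm, List.append_assoc, List.append_assoc, hu', hi]
    exact List.Lex.append_left _ (.rel (hal x List.mem_cons_self)) c

/-- The Chen–Fox–Lyndon factorization of `w` as a product of powers of strictly decreasing Lyndon
words; a pair `(α, n)` in the list stands for the factor `α ^ n`. -/
structure IsLyndonFactorization (L : List (List X × ℕ)) (w : List X) : Prop where
  isLyndon : ∀ p ∈ L, IsLyndon p.1
  one_le : ∀ p ∈ L, 1 ≤ p.2
  isChain : L.IsChain fun p q => List.Lex (· < ·) q.1 p.1
  flatten_eq : (L.map fun p => (List.replicate p.2 p.1).flatten).flatten = w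

theorem IsLyndon.isLyndonFactorization_pow {w : List X} (hw : IsLyndon w) {n : ℕ} (hn : 1 ≤ n) :
    IsLyndonFactorization [(w, n)] (List.replicate n w).flatten where
  isLyndon := by simpa using hw
  one_le := by simpa using hn
  isChain := List.isChain_singleton _
  flatten_eq := by simp

/-- `C` is a coefficient function: on Lyndon words it satisfies the recursion that removes the
first letter and factors the rest. It is a total function on words, unconstrained on words that are
not Lyndon. -/
structure IsLyndonCoeff {k : Type*} [DivisionSemiring k] (C : List X → k) : Prop where
  singleton : ∀ x, C [x] = 1
  cons : ∀ {x : X} {w : List X} {L : List (List X × ℕ)}, IsLyndon (x :: w) → w ≠ [] →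
    IsLyndonFactorization L w →
    C (x :: w) =
      (w.length ! : k) / (L.map fun p => (p.1.length ! : k) ^ p.2 * (p.2 ! : k)).prod *
        (L.map fun p => C p.1 ^ p.2).prod

namespace IsLyndonCoeff

variable {k : Type*} [DivisionSemiring k] {C : List X → k}

theorem cons_pow (hC : IsLyndonCoeff C) {x : X} {w : List X} {n : ℕ} (hw : IsLyndon w)
    (hn : 1 ≤ n) (hxw : IsLyndon (x :: (List.replicate n w).flatten)) :
    C (x :: (List.replicate n w).flatten) =
      ((n * w.length) ! : k) / ((w.length ! : k) ^ n * (n ! : k)) * C w ^ n := by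
  have hne : (List.replicate n w).flatten ≠ [] := by
    simpa using ⟨Nat.one_le_iff_ne_zero.1 hn, hw.1⟩
  simpa using hC.cons hxw hne (hw.isLyndonFactorization_pow hn)

variable [CharZero k]

theorem cons_eq (hC : IsLyndonCoeff C) {x : X} {w : List X} (hw : IsLyndon w)
    (hxw : IsLyndon (x :: w)) : C (x :: w) = C w := by
  simpa [Nat.factorial_ne_zero] using hC.cons_pow hw le_rfl (x := x) (by simpa using hxw)

theorem cons_replicate (hC : IsLyndonCoeff C) {a b : X} (hab : a < b) {t : ℕ} (ht : 1 ≤ t) :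
    C (a :: List.replicate t b) = 1 := by
  have hlyndon : IsLyndon (a :: List.replicate t b) :=
    .replicate_append le_rfl (by simpa using Nat.one_le_iff_ne_zero.1 ht)
      fun x hx => List.eq_of_mem_replicate hx ▸ hab
  simpa [hC.singleton, Nat.factorial_ne_zero] using
    hC.cons_pow (.singleton b) ht (by simpa using hlyndon)

theorem replicate_append (hC : IsLyndonCoeff C) {a : X} {s : ℕ} {l : List X} (hs : 1 ≤ s)
    (hl : l ≠ []) (hal : ∀ x ∈ l, a < x) : C (List.replicate s a ++ l) = C (a :: l) := by
  induction s, hs using Nat.le_induction with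
  | base => rfl
  | succ n hn ih =>
    rw [← ih]
    exact hC.cons_eq (.replicate_append hn hl hal)
      (.replicate_append n.succ_pos hl hal)

end IsLyndonCoeff

theorem stmt_6_general {k : Type*} [DivisionSemiring k] [CharZero k] {C : List X → k}
    (hC : IsLyndonCoeff C) {a b : X} (hab : a < b) {s t : ℕ} (hs : 1 ≤ s) (ht : 1 ≤ t) :
    IsLyndon (List.replicate s a ++ List.replicate t b) ∧
      C (List.replicate s a ++ List.replicate t b) = 1 := by
  have hne : List.replicate t b ≠ [] := by simpa using Nat.one_le_iff_ne_zero.1 ht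
  have hlt : ∀ x ∈ List.replicate t b, a < x := fun x hx => List.eq_of_mem_replicate hx ▸ hab
  exact ⟨.replicate_append hs hne hlt,
    (hC.replicate_append hs hne hlt).trans (hC.cons_replicate hab ht)⟩

end

/-- Over the alphabet `{1 ≺ 2}` (encoded as `Fin 2`, letter `1` is `0`, letter `2`
is `1`), the word `1^s 2^t` (`s, t ≥ 1`) is a Lyndon word and its coefficient
`C(1^s 2^t)` equals `1`, where `C` is the coefficient function characterized by
the hypotheses `hC1`, `hC2`. -/
theorem stmt_6 (k : Type*) [Field k] [CharZero k]
    (C : List (Fin 2) → k)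
    (hC1 : ∀ x : Fin 2, C [x] = 1)
    (hC2 : ∀ (x : Fin 2) (w : List (Fin 2)) (L : List (List (Fin 2) × ℕ)),
      IsLyndon (x :: w) → w ≠ [] →
      (∀ p ∈ L, IsLyndon p.1 ∧ 1 ≤ p.2) →
      L.Chain' (fun p q => List.Lex (· < ·) q.1 p.1) →
      (L.map fun p => (List.replicate p.2 p.1).flatten).flatten = w →
      C (x :: w) =
        (w.length.factorial : k) /
            (L.map fun p => (p.1.length.factorial : k) ^ p.2 * (p.2.factorial : k)).prod *
          (L.map fun p => C p.1 ^ p.2).prod)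
    (s t : ℕ) (hs : 1 ≤ s) (ht : 1 ≤ t) :
    IsLyndon (List.replicate s (0 : Fin 2) ++ List.replicate t (1 : Fin 2)) ∧
      C (List.replicate s (0 : Fin 2) ++ List.replicate t (1 : Fin 2)) = 1 :=
  stmt_6_general ⟨hC1, fun hxw hw hL => hC2 _ _ _ hxw hw
    (fun p hp => ⟨hL.isLyndon p hp, hL.one_le p hp⟩) hL.isChain hL.flatten_eq⟩
    zero_lt_one hs ht
end
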